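/- Fix an integer K ≥ 2 and reals ε_e > 0, Δ ≥ 0, ε_a with Δ/(1+Δ) < ε_a < 1, and define γ^out, γ^in as in the parameterization below. Then the symmetrized KL divergence between the corresponding Dirichlet densities satisfies ∫_{S_K} f_{γ^out} log(f_{γ^out}/f_{γ^in}) dp + ∫_{S_K} f_{γ^in} log(f_{γ^in}/f_{γ^out}) dp = (Δ(1−ε_a)/ε_e) · ( ψ((1+Δ)(1−ε_a)/ε_e) − ψ((1−ε_a)/ε_e) + ψ(ε_a/((K−1)ε_e)) − ψ((ε_a(1+Δ)−Δ)/((K−1)ε_e)) ). -/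

import Mathlib

open MeasureTheory

/-- The open standard simplex `S_K` in coordinates `(p_0, …, p_{K-2}) ∈ ℝ^{K-1}`:
all coordinates positive and their sum less than 1 (so that `p_{K-1} = 1 - Σ` is positive). -/
def simplexCoords (K : ℕ) : Set (Fin (K - 1) → ℝ) :=
  {x | (∀ i, 0 < x i) ∧ ∑ i, x i < 1}

/-- The full probability vector `p ∈ ℝ^K` obtained from the coordinates
`(p_0, …, p_{K-2})`, with `p_{K-1} = 1 - Σ_{k < K-1} p_k`. -/
noncomputable def fullProb (K : ℕ) (x : Fin (K - 1) → ℝ) : Fin K → ℝ :=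
  fun k => if h : (k : ℕ) < K - 1 then x ⟨k, h⟩ else 1 - ∑ i, x i

/-- Multivariate Beta function `B(γ) = (∏ₖ Γ(γₖ)) / Γ(Σₖ γₖ)`. -/
noncomputable def multiBeta {K : ℕ} (γ : Fin K → ℝ) : ℝ :=
  (∏ i, Real.Gamma (γ i)) / Real.Gamma (∑ i, γ i)

/-- Dirichlet density `f_γ(p) = (1/B(γ)) ∏ₖ pₖ^(γₖ - 1)` in simplex coordinates. -/
noncomputable def dirichletPdf {K : ℕ} (γ : Fin K → ℝ) (x : Fin (K - 1) → ℝ) : ℝ :=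
  (1 / multiBeta γ) * ∏ k, (fullProb K x k) ^ (γ k - 1)

/-- Digamma function `ψ(x) = Γ'(x)/Γ(x)`. -/
noncomputable def digamma (x : ℝ) : ℝ := deriv Real.Gamma x / Real.Gamma x

/-- Dirichlet parameters for the model trained *without* the target point. -/
noncomputable def gammaOut (K : ℕ) (epsE epsA : ℝ) : Fin K → ℝ := fun k =>
  if (k : ℕ) = 0 then (1 - epsA) / epsE else epsA / (((K : ℝ) - 1) * epsE)

/-- Dirichlet parameters for the model trained *with* the target point. -/
noncomputable def gammaIn (K : ℕ) (epsE Δ epsA : ℝ) : Fin K → ℝ := fun k =>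
  if (k : ℕ) = 0 then (1 + Δ) * (1 - epsA) / epsE
  else (epsA * (1 + Δ) - Δ) / (((K : ℝ) - 1) * epsE)

/-- The upper bound on the attacker's advantage under confidence-vector disclosure. -/
noncomputable def AdvCVub (Δ epsA epsE : ℝ) (K : ℕ) : ℝ :=
  Real.sqrt ((Δ * (1 - epsA) / epsE) *
    (digamma ((1 + Δ) * (1 - epsA) / epsE) - digamma ((1 - epsA) / epsE)
      + digamma (epsA / (((K : ℝ) - 1) * epsE))
      - digamma ((epsA * (1 + Δ) - Δ) / (((K : ℝ) - 1) * epsE))))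

open ProbabilityTheory in
lemma beta_scaled {a b s : ℝ} (ha : 0 < a) (hb : 0 < b) (hs : 0 < s) :
    ∫⁻ y : ℝ, (if 0 < y ∧ y < s then ENNReal.ofReal (y ^ (a - 1) * (s - y) ^ (b - 1)) else 0)
      = ENNReal.ofReal (s ^ (a + b - 1) * beta a b) := by
  have hm : Measurable (fun y : ℝ =>
      (if 0 < y ∧ y < s then ENNReal.ofReal (y ^ (a - 1) * (s - y) ^ (b - 1)) else 0)) :=
    Measurable.ite measurableSet_Ioo (by fun_prop) (by fun_prop)
  have hB := beta_pos ha hb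
  rw [← Real.smul_map_volume_mul_left hs.ne', lintegral_smul_measure,
    lintegral_map hm (measurable_const_mul s)]
  have key : ∀ y : ℝ, (if 0 < s * y ∧ s * y < s then
      ENNReal.ofReal ((s * y) ^ (a - 1) * (s - s * y) ^ (b - 1)) else 0)
      = ENNReal.ofReal (s ^ (a - 1) * s ^ (b - 1) * beta a b) * betaPDF a b y := by
    intro y
    have h1 : (0 < s * y ∧ s * y < s) ↔ (0 < y ∧ y < 1) := by
      constructor
      · rintro ⟨h, h'⟩
        have := (mul_pos_iff_of_pos_left hs).1 h
        exact ⟨this, by nlinarith⟩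
      · rintro ⟨h, h'⟩
        exact ⟨by positivity, by nlinarith⟩
    rw [betaPDF_eq]
    by_cases h : 0 < y ∧ y < 1
    · rw [if_pos (h1.2 h), if_pos h, ← ENNReal.ofReal_mul (by positivity)]
      congr 1
      rw [show s - s * y = s * (1 - y) by ring, Real.mul_rpow hs.le h.1.le,
        Real.mul_rpow hs.le (by linarith [h.2])]
      field_simp
    · rw [if_neg (fun h' => h (h1.1 h')), if_neg h]; simp
  simp_rw [key]
  rw [lintegral_const_mul' _ _ ENNReal.ofReal_ne_top, lintegral_betaPDF_eq_one ha hb, mul_one,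
    smul_eq_mul, ← ENNReal.ofReal_mul (abs_nonneg s), abs_of_pos hs]
  congr 1
  rw [show a + b - 1 = 1 + (a - 1) + (b - 1) by ring, Real.rpow_add hs, Real.rpow_add hs,
    Real.rpow_one]
  ring

lemma dirichlet_lintegral (n : ℕ) : ∀ (g : Fin n → ℝ) (b : ℝ), (∀ i, 0 < g i) → 0 < b →
    ∫⁻ x : Fin n → ℝ, (if (∀ i, 0 < x i) ∧ ∑ i, x i < 1 then
      ENNReal.ofReal ((∏ i, x i ^ (g i - 1)) * (1 - ∑ i, x i) ^ (b - 1)) else 0)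
      = ENNReal.ofReal ((∏ i, Real.Gamma (g i)) * Real.Gamma b / Real.Gamma (∑ i, g i + b)) := by
  induction n with
  | zero =>
    intro g b hg hb
    have := (Real.Gamma_pos_of_pos hb).ne'
    rw [lintegral_unique]
    simp [this, volume_pi]
  | succ n ih =>
    intro g b hg hb
    have hm : Measurable (fun x : Fin (n+1) → ℝ =>
      (if (∀ i, 0 < x i) ∧ ∑ i, x i < 1 then
      ENNReal.ofReal ((∏ i, x i ^ (g i - 1)) * (1 - ∑ i, x i) ^ (b - 1)) else 0)) := by
      refine Measurable.ite ?_ (by fun_prop) (by fun_prop)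
      refine MeasurableSet.inter ?_
        (measurableSet_lt (f := fun x : Fin (n+1) → ℝ => ∑ i, x i) (by fun_prop) measurable_const)
      have : {x : Fin (n+1) → ℝ | ∀ i, 0 < x i} = ⋂ i, {x | 0 < x i} := by ext; simp
      change MeasurableSet {x : Fin (n+1) → ℝ | ∀ i, 0 < x i}
      rw [this]
      exact MeasurableSet.iInter fun i => measurableSet_lt measurable_const (measurable_pi_apply i)
    have hmp := (volume_preserving_piFinSuccAbove (fun _ : Fin (n+1) => ℝ) 0).symm
    rw [← hmp.lintegral_comp hm, Measure.volume_eq_prod,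
      lintegral_prod_symm _ (by
        exact (hm.comp (MeasurableEquiv.measurable
          (MeasurableEquiv.piFinSuccAbove (fun _ : Fin (n+1) => ℝ) 0).symm)).aemeasurable)]
    have inner : ∀ y : Fin n → ℝ, (∫⁻ x : ℝ,
        (if (∀ i, 0 < (MeasurableEquiv.piFinSuccAbove (fun _ : Fin (n+1) => ℝ) 0).symm (x, y) i) ∧
          ∑ i, (MeasurableEquiv.piFinSuccAbove (fun _ : Fin (n+1) => ℝ) 0).symm (x, y) i < 1 then
        ENNReal.ofReal ((∏ i, (MeasurableEquiv.piFinSuccAbove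
          (fun _ : Fin (n+1) => ℝ) 0).symm (x, y) i ^ (g i - 1)) *
          (1 - ∑ i, (MeasurableEquiv.piFinSuccAbove
            (fun _ : Fin (n+1) => ℝ) 0).symm (x, y) i) ^ (b - 1)) else 0))
        = ENNReal.ofReal (ProbabilityTheory.beta (g 0) b) *
          (if (∀ i, 0 < y i) ∧ ∑ i, y i < 1 then
            ENNReal.ofReal ((∏ i, y i ^ (g i.succ - 1)) * (1 - ∑ i, y i) ^ (g 0 + b - 1))
            else 0) := by
      intro y
      have e : ∀ x : ℝ, (MeasurableEquiv.piFinSuccAbove (fun _ : Fin (n+1) => ℝ) 0).symm (x, y)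
          = (Fin.cons x y : Fin (n+1) → ℝ) := by
        intro x
        simp [MeasurableEquiv.piFinSuccAbove, Fin.insertNthEquiv]
      simp only [e, Fin.forall_fin_succ, Fin.sum_univ_succ, Fin.prod_univ_succ, Fin.cons_zero,
        Fin.cons_succ]
      by_cases hy : (∀ i, 0 < y i) ∧ ∑ i, y i < 1
      · rw [if_pos hy]
        have hP : 0 ≤ ∏ i, y i ^ (g i.succ - 1) :=
          Finset.prod_nonneg fun i _ => Real.rpow_nonneg (hy.1 i).le _
        have hs : 0 < 1 - ∑ i, y i := by linarith [hy.2]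
        have : ∀ x : ℝ, (if (0 < x ∧ ∀ i, 0 < y i) ∧ x + ∑ i, y i < 1 then
            ENNReal.ofReal ((x ^ (g 0 - 1) * ∏ i, y i ^ (g i.succ - 1)) *
              (1 - (x + ∑ i, y i)) ^ (b - 1)) else 0)
            = ENNReal.ofReal (∏ i, y i ^ (g i.succ - 1)) *
            (if 0 < x ∧ x < 1 - ∑ i, y i then
              ENNReal.ofReal (x ^ (g 0 - 1) * ((1 - ∑ i, y i) - x) ^ (b - 1)) else 0) := by
          intro x
          by_cases hx : 0 < x ∧ x < 1 - ∑ i, y i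
          · rw [if_pos hx, if_pos ⟨⟨hx.1, hy.1⟩, by linarith [hx.2]⟩, ← ENNReal.ofReal_mul hP]
            congr 1
            rw [show 1 - (x + ∑ i, y i) = (1 - ∑ i, y i) - x by ring]
            ring
          · rw [if_neg hx, if_neg, mul_zero]
            rintro ⟨⟨h1, _⟩, h2⟩
            exact hx ⟨h1, by linarith⟩
        simp_rw [this]
        rw [lintegral_const_mul' _ _ ENNReal.ofReal_ne_top, beta_scaled (hg 0) hb hs,
          ← ENNReal.ofReal_mul hP,
          ← ENNReal.ofReal_mul (ProbabilityTheory.beta_pos (hg 0) hb).le]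
        congr 1
        ring
      · rw [if_neg hy, mul_zero]
        rw [lintegral_eq_zero_of_ae_eq_zero]
        refine Filter.Eventually.of_forall fun x => if_neg ?_
        rintro ⟨⟨h1, h2⟩, h3⟩
        exact hy ⟨h2, by linarith⟩
    simp_rw [inner]
    rw [lintegral_const_mul' _ _ ENNReal.ofReal_ne_top,
      ih (fun i => g i.succ) (g 0 + b) (fun i => hg _) (add_pos (hg 0) hb),
      ← ENNReal.ofReal_mul (ProbabilityTheory.beta_pos (hg 0) hb).le]
    congr 1
    have := (Real.Gamma_pos_of_pos (add_pos (hg 0) hb)).ne'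
    rw [ProbabilityTheory.beta, Fin.prod_univ_succ, Fin.sum_univ_succ,
      show ∑ i : Fin n, g i.succ + (g 0 + b) = g 0 + ∑ i : Fin n, g i.succ + b by ring]
    field_simp

lemma measurableSet_simplexCoords (K : ℕ) : MeasurableSet (simplexCoords K) := by
  refine MeasurableSet.inter ?_
    (measurableSet_lt (f := fun x : Fin (K-1) → ℝ => ∑ i, x i) (by fun_prop) measurable_const)
  have : {x : Fin (K-1) → ℝ | ∀ i, 0 < x i} = ⋂ i, {x | 0 < x i} := by ext; simp
  change MeasurableSet {x : Fin (K-1) → ℝ | ∀ i, 0 < x i}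
  rw [this]
  exact MeasurableSet.iInter fun i => measurableSet_lt measurable_const (measurable_pi_apply i)

lemma fullProb_pos {K : ℕ} {x : Fin (K - 1) → ℝ} (hx : x ∈ simplexCoords K) (k : Fin K) :
    0 < fullProb K x k := by
  unfold fullProb
  split_ifs with h
  · exact hx.1 _
  · linarith [hx.2]

lemma measurable_fullProb (K : ℕ) (k : Fin K) : Measurable (fun x => fullProb K x k) := by
  unfold fullProb
  split_ifs with h <;> fun_prop

/-- Unnormalised Dirichlet density. -/
noncomputable def dirW {K : ℕ} (γ : Fin K → ℝ) (x : Fin (K - 1) → ℝ) : ℝ :=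
  ∏ k, (fullProb K x k) ^ (γ k - 1)

lemma measurable_dirW {K : ℕ} (γ : Fin K → ℝ) : Measurable (dirW γ) := by
  unfold dirW
  exact Finset.measurable_prod _ fun k _ => (measurable_fullProb K k).pow_const _

lemma dirW_pos {K : ℕ} (γ : Fin K → ℝ) {x : Fin (K - 1) → ℝ} (hx : x ∈ simplexCoords K) :
    0 < dirW γ x := Finset.prod_pos fun k _ => Real.rpow_pos_of_pos (fullProb_pos hx k) _

lemma multiBeta_pos {n : ℕ} (γ : Fin (n+1) → ℝ) (h : ∀ k, 0 < γ k) : 0 < multiBeta γ :=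
  div_pos (Finset.prod_pos fun k _ => Real.Gamma_pos_of_pos (h k))
    (Real.Gamma_pos_of_pos (Finset.sum_pos (fun k _ => h k) Finset.univ_nonempty))

lemma lintegral_dirW {n : ℕ} (γ : Fin (n+1) → ℝ) (h : ∀ k, 0 < γ k) :
    ∫⁻ x in simplexCoords (n+1), ENNReal.ofReal (dirW γ x) = ENNReal.ofReal (multiBeta γ) := by
  classical
  have := dirichlet_lintegral n (fun i => γ i.castSucc) (γ (Fin.last n)) (fun i => h _) (h _)
  rw [multiBeta, Fin.prod_univ_castSucc, Fin.sum_univ_castSucc, ← this,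
    ← lintegral_indicator (measurableSet_simplexCoords _)]
  congr 1
  ext x
  rw [Set.indicator_apply]
  have e : dirW γ x = (∏ i : Fin n, x i ^ (γ i.castSucc - 1)) *
      (1 - ∑ i : Fin n, x i) ^ (γ (Fin.last n) - 1) := by
    rw [dirW, Fin.prod_univ_castSucc]
    simp [fullProb]
  rw [e]
  exact if_congr Iff.rfl rfl rfl

lemma integrable_dirW {n : ℕ} (γ : Fin (n+1) → ℝ) (h : ∀ k, 0 < γ k) :
    IntegrableOn (dirW γ) (simplexCoords (n+1)) := by
  refine ⟨(measurable_dirW γ).aestronglyMeasurable, ?_⟩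
  rw [hasFiniteIntegral_iff_ofReal, lintegral_dirW γ h]
  · exact ENNReal.ofReal_lt_top
  · exact ae_restrict_of_forall_mem (measurableSet_simplexCoords _) fun x hx => (dirW_pos γ hx).le

lemma integral_dirW {n : ℕ} (γ : Fin (n+1) → ℝ) (h : ∀ k, 0 < γ k) :
    ∫ x in simplexCoords (n+1), dirW γ x = multiBeta γ := by
  rw [integral_eq_lintegral_of_nonneg_ae
    (ae_restrict_of_forall_mem (measurableSet_simplexCoords _) fun x hx => (dirW_pos γ hx).le)
    (measurable_dirW γ).aestronglyMeasurable, lintegral_dirW γ h,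
    ENNReal.toReal_ofReal (multiBeta_pos γ h).le]

/-- The linear form in the log-probabilities. -/
noncomputable def dirL {K : ℕ} (d : Fin K → ℝ) (x : Fin (K - 1) → ℝ) : ℝ :=
  ∑ k, d k * Real.log (fullProb K x k)

lemma dirW_exp {K : ℕ} (γ d : Fin K → ℝ) (t : ℝ) {x : Fin (K - 1) → ℝ}
    (hx : x ∈ simplexCoords K) :
    dirW γ x * Real.exp (t * dirL d x) = dirW (fun k => γ k + t * d k) x := by
  rw [dirW, dirL, dirW, Finset.mul_sum, Real.exp_sum, ← Finset.prod_mul_distrib]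
  refine Finset.prod_congr rfl fun k _ => ?_
  have hp := fullProb_pos hx k
  rw [Real.rpow_def_of_pos hp, Real.rpow_def_of_pos hp, ← Real.exp_add]
  congr 1
  ring

lemma hasDerivAt_multiBeta {n : ℕ} (γ d : Fin (n+1) → ℝ) (h : ∀ k, 0 < γ k)
    (hd : ∑ k, d k = 0) :
    HasDerivAt (fun t : ℝ => multiBeta (fun k => γ k + t * d k))
      (multiBeta γ * ∑ k, d k * digamma (γ k)) 0 := by
  have hG : ∀ k, HasDerivAt (fun t : ℝ => Real.Gamma (γ k + t * d k))
      (deriv Real.Gamma (γ k) * d k) 0 := by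
    intro k
    have h1 : HasDerivAt (fun t : ℝ => γ k + t * d k) (d k) 0 := by
      simpa using ((hasDerivAt_id (0:ℝ)).mul_const (d k)).const_add (γ k)
    have h2 : DifferentiableAt ℝ Real.Gamma (γ k) :=
      Real.differentiableAt_Gamma (fun m => by have := h k; have : (0:ℝ) ≤ m := m.cast_nonneg; linarith)
    have h3 : HasDerivAt Real.Gamma (deriv Real.Gamma (γ k)) (γ k + 0 * d k) := by
      simpa using h2.hasDerivAt
    exact h3.comp 0 h1
  have hP := (HasDerivAt.fun_finsetProd (u := Finset.univ) (fun k _ => hG k)).div_const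
    (Real.Gamma (∑ k, γ k))
  have e : (fun t : ℝ => multiBeta (fun k => γ k + t * d k))
      = fun t => (∏ k, Real.Gamma (γ k + t * d k)) / Real.Gamma (∑ k, γ k) := by
    ext t
    rw [multiBeta, Finset.sum_add_distrib, ← Finset.mul_sum, hd, mul_zero, add_zero]
  rw [e]
  refine hP.congr_deriv (Eq.symm ?_)
  unfold multiBeta
  rw [div_mul_eq_mul_div, Finset.mul_sum]
  congr 1
  refine Finset.sum_congr rfl fun k _ => ?_
  have := (Real.Gamma_pos_of_pos (h k)).ne'
  rw [← Finset.mul_prod_erase _ _ (Finset.mem_univ k), digamma]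
  simp only [zero_mul, add_zero, smul_eq_mul]
  field_simp

open ProbabilityTheory in
lemma dirichlet_log {n : ℕ} (γ d : Fin (n+1) → ℝ) (h : ∀ k, 0 < γ k) (hd : ∑ k, d k = 0) :
    IntegrableOn (fun x => dirW γ x * dirL d x) (simplexCoords (n+1)) ∧
    ∫ x in simplexCoords (n+1), dirW γ x * dirL d x
      = multiBeta γ * ∑ k, d k * digamma (γ k) := by
  set ν : Measure (Fin (n+1-1) → ℝ) := volume.restrict (simplexCoords (n+1)) with hν
  set μ : Measure (Fin (n+1-1) → ℝ) := ν.withDensity (fun x => ENNReal.ofReal (dirW γ x)) with hμ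
  have hS := measurableSet_simplexCoords (n+1)
  have hWm : Measurable (fun x => ENNReal.ofReal (dirW γ x)) := (measurable_dirW γ).ennreal_ofReal
  have hWt : ∀ᵐ x ∂ν, ENNReal.ofReal (dirW γ x) < ⊤ :=
    Filter.Eventually.of_forall fun x => ENNReal.ofReal_lt_top
  have hI : ∀ f g : (Fin (n+1-1) → ℝ) → ℝ, (∀ x ∈ simplexCoords (n+1), dirW γ x * f x = g x) →
      ((Integrable f μ ↔ Integrable g ν) ∧ ∫ x, f x ∂μ = ∫ x, g x ∂ν) := by
    intro f g hfg
    have hae : (fun x => (ENNReal.ofReal (dirW γ x)).toReal • f x) =ᵐ[ν] g := by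
      refine ae_restrict_of_forall_mem hS fun x hx => ?_
      beta_reduce
      rw [ENNReal.toReal_ofReal (dirW_pos γ hx).le, smul_eq_mul]
      exact hfg x hx
    constructor
    · rw [hμ, integrable_withDensity_iff_integrable_smul' hWm hWt]
      exact integrable_congr hae
    · rw [hμ, integral_withDensity_eq_integral_toReal_smul hWm hWt]
      exact integral_congr_ae hae
  have hpos : ∀ᶠ t : ℝ in nhds 0, ∀ k, 0 < γ k + t * d k := by
    rw [Filter.eventually_all]
    intro k
    have : Filter.Tendsto (fun t : ℝ => γ k + t * d k) (nhds 0) (nhds (γ k + 0 * d k)) :=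
      Continuous.tendsto (by fun_prop) 0
    exact this.eventually (lt_mem_nhds (by simpa using h k))
  have hint : (0:ℝ) ∈ interior (integrableExpSet (dirL (K := n+1) d) μ) := by
    rw [mem_interior_iff_mem_nhds]
    filter_upwards [hpos] with t ht
    exact (hI _ _ fun x hx => dirW_exp γ d t hx).1.2 (integrable_dirW _ ht)
  have hmgf : mgf (dirL (K := n+1) d) μ =ᶠ[nhds 0]
      fun t : ℝ => multiBeta (fun k => γ k + t * d k) := by
    filter_upwards [hpos] with t ht
    rw [mgf, (hI _ _ fun x hx => dirW_exp γ d t hx).2]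
    exact integral_dirW _ ht
  have hL := hI (dirL (K := n+1) d) (fun x => dirW (K := n+1) γ x * dirL d x) (fun x _ => rfl)
  refine ⟨hL.1.1 (integrable_of_mem_interior_integrableExpSet hint), ?_⟩
  refine hL.2.symm.trans ?_
  rw [← deriv_mgf_zero hint, hmgf.deriv_eq, (hasDerivAt_multiBeta γ d h hd).deriv]

lemma dirichlet_kl {n : ℕ} (γ δ : Fin (n+1) → ℝ) (hγ : ∀ k, 0 < γ k) (hδ : ∀ k, 0 < δ k)
    (hs : ∑ k, γ k = ∑ k, δ k) :
    ∫ x in simplexCoords (n+1), dirichletPdf γ x * Real.log (dirichletPdf γ x / dirichletPdf δ x)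
      = Real.log (multiBeta δ) - Real.log (multiBeta γ)
        + ∑ k, (γ k - δ k) * digamma (γ k) := by
  have hBγ := multiBeta_pos γ hγ
  have hBδ := multiBeta_pos δ hδ
  obtain ⟨hi, he⟩ := dirichlet_log γ (fun k => γ k - δ k) hγ
    (by rw [Finset.sum_sub_distrib, hs, sub_self])
  have e : ∀ x ∈ simplexCoords (n+1),
      dirichletPdf γ x * Real.log (dirichletPdf γ x / dirichletPdf δ x)
      = (1 / multiBeta γ * (Real.log (multiBeta δ) - Real.log (multiBeta γ))) * dirW γ x
        + 1 / multiBeta γ * (dirW γ x * dirL (fun k => γ k - δ k) x) := by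
    intro x hx
    have hlog : ∀ η : Fin (n+1) → ℝ, Real.log (dirW η x)
        = ∑ k, (η k - 1) * Real.log (fullProb (n+1) x k) := by
      intro η
      rw [dirW, Real.log_prod (fun k _ => (Real.rpow_pos_of_pos (fullProb_pos hx k) _).ne')]
      exact Finset.sum_congr rfl fun k _ => Real.log_rpow (fullProb_pos hx k) _
    have hL : Real.log (dirW γ x) - Real.log (dirW δ x) = dirL (fun k => γ k - δ k) x := by
      rw [hlog, hlog, ← Finset.sum_sub_distrib, dirL]
      exact Finset.sum_congr rfl fun k _ => by ring
    have h1 := dirW_pos γ hx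
    have h2 := dirW_pos δ hx
    have e1 : ∀ η : Fin (n+1) → ℝ, dirichletPdf η x = 1 / multiBeta η * dirW η x := fun _ => rfl
    rw [e1, e1, Real.log_div (by positivity) (by positivity),
      Real.log_mul (by positivity) h1.ne', Real.log_mul (by positivity) h2.ne', one_div, one_div,
      Real.log_inv, Real.log_inv, ← hL]
    ring
  rw [setIntegral_congr_fun (measurableSet_simplexCoords _) e,
    integral_add ((integrable_dirW γ hγ).const_mul _) (hi.const_mul _), integral_const_mul,
    integral_const_mul, he, integral_dirW γ hγ]
  field_simp

/-- Closed form of the symmetrized KL divergence between the two Dirichlet densities. -/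
theorem stmt8 (K : ℕ) (hK : 2 ≤ K) (epsE Δ epsA : ℝ)
    (hεe : 0 < epsE) (hΔ : 0 ≤ Δ) (hεa₁ : Δ / (1 + Δ) < epsA) (hεa₂ : epsA < 1) :
    (∫ x in simplexCoords K,
        dirichletPdf (gammaOut K epsE epsA) x
          * Real.log (dirichletPdf (gammaOut K epsE epsA) x
              / dirichletPdf (gammaIn K epsE Δ epsA) x))
      + (∫ x in simplexCoords K,
          dirichletPdf (gammaIn K epsE Δ epsA) x
            * Real.log (dirichletPdf (gammaIn K epsE Δ epsA) x
                / dirichletPdf (gammaOut K epsE epsA) x))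
      = (Δ * (1 - epsA) / epsE) *
          (digamma ((1 + Δ) * (1 - epsA) / epsE) - digamma ((1 - epsA) / epsE)
            + digamma (epsA / (((K : ℝ) - 1) * epsE))
            - digamma ((epsA * (1 + Δ) - Δ) / (((K : ℝ) - 1) * epsE))) := by
  obtain ⟨n, rfl⟩ : ∃ n, K = (n + 1) + 1 := ⟨K - 2, by omega⟩
  have hn : (0:ℝ) < (n:ℝ) + 1 := by positivity
  have hA : 0 < epsA := lt_of_le_of_lt (by positivity) hεa₁
  have h1 : 0 < epsA * (1 + Δ) - Δ := by
    rw [div_lt_iff₀ (by positivity)] at hεa₁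
    linarith
  have h2 : 0 < 1 - epsA := by linarith
  have hK1 : (((n + 1 + 1 : ℕ) : ℝ) - 1) = (n:ℝ) + 1 := by push_cast; ring
  have hout : ∀ k, 0 < gammaOut (n+1+1) epsE epsA k := by
    intro k; unfold gammaOut; rw [hK1]; split_ifs <;> positivity
  have hin : ∀ k, 0 < gammaIn (n+1+1) epsE Δ epsA k := by
    intro k; unfold gammaIn; rw [hK1]; split_ifs <;> positivity
  have hs : ∑ k, gammaOut (n+1+1) epsE epsA k = ∑ k, gammaIn (n+1+1) epsE Δ epsA k := by
    rw [Fin.sum_univ_succ, Fin.sum_univ_succ (n := n + 1)]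
    simp only [gammaOut, gammaIn, hK1, Fin.val_zero, Fin.val_succ, if_true, Nat.add_eq_zero_iff,
      one_ne_zero, and_false, if_false, Finset.sum_const, Finset.card_univ, Fintype.card_fin,
      nsmul_eq_mul]
    push_cast
    field_simp
    ring
  rw [dirichlet_kl _ _ hout hin hs, dirichlet_kl _ _ hin hout hs.symm]
  rw [Fin.sum_univ_succ, Fin.sum_univ_succ (n := n + 1)]
  simp only [gammaOut, gammaIn, hK1, Fin.val_zero, Fin.val_succ, if_true, Nat.add_eq_zero_iff,
    one_ne_zero, and_false, if_false, Finset.sum_const, Finset.card_univ, Fintype.card_fin,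
    nsmul_eq_mul]
  push_cast
  generalize digamma ((1 + Δ) * (1 - epsA) / epsE) = a
  generalize digamma ((1 - epsA) / epsE) = b
  generalize digamma (epsA / (((n:ℝ) + 1) * epsE)) = c
  generalize digamma ((epsA * (1 + Δ) - Δ) / (((n:ℝ) + 1) * epsE)) = e
  field_simp
  ring
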